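/- arXiv:1811.11890 — 3 statements merged into one kernel-verified Lean document; each statement's English description precedes it below -/
import Mathlib

section
/- Let δ > 0 and ω ∈ ℝ, and let u : ℝ → ℝ be three times continuously differentiable on ℝ and four times continuously differentiable on (−∞,0) and on (0,∞), satisfying −(u + 2ω²u'' + ω⁴u'''') + δ²u − u³ = 0 on (−∞,0) and −(u + 2ω²u'' + ω⁴u'''') − δ²u − u³ = 0 on (0,∞). For η ∈ ℝ set H_η(x) := −(ω⁴/2)·u''(x)² + ω²·u'(x)² + ω⁴·u'(x)·u'''(x) + (1/4)·(1 − η + u(x)²)². Then there exist constants h_l and h_r such that H_{δ²}(x) = h_l for all x < 0, H_{−δ²}(x) = h_r for all x > 0, and the quenching-front constraint −δ²·u(0)² − δ² = h_l − h_r holds. -/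
/-!
Multiplying the equation by `u'` makes it exact: `H_η' = u' · (u + 2ω²u'' + ω⁴u'''' - ηu + u³)`,
which vanishes wherever `u` solves the equation with parameter `η`
(`hasDerivAt_swiftHohenbergH`). Since `u` is `C³`, both `H_{δ²}` and `H_{-δ²}` are continuous
across `x = 0`, so each one equals its value at `0` on its half-line, by the mean value
theorem. All terms except the quartic potential agree at `0`, so
`h_l - h_r = ((1 - δ² + u(0)²)² - (1 + δ² + u(0)²)²) / 4 = -δ²u(0)² - δ²`.
-/

/-- The Hamiltonian `H_η` as a function of `x`, with `u1`, `u2`, `u3` standing for the first three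
derivatives of `u`. -/
noncomputable def swiftHohenbergH (ω η : ℝ) (u u1 u2 u3 : ℝ → ℝ) (x : ℝ) : ℝ :=
  -(ω ^ 4 / 2) * (u2 x) ^ 2 + ω ^ 2 * (u1 x) ^ 2 + ω ^ 4 * (u1 x) * (u3 x)
    + (1 / 4) * (1 - η + (u x) ^ 2) ^ 2

/-- The Hamiltonian is stationary at each point where the equation with the same `η` holds. -/
lemma hasDerivAt_swiftHohenbergH {ω η x v4 : ℝ} {u u1 u2 u3 : ℝ → ℝ}
    (h0 : HasDerivAt u (u1 x) x) (h1 : HasDerivAt u1 (u2 x) x)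
    (h2 : HasDerivAt u2 (u3 x) x) (h3 : HasDerivAt u3 v4 x)
    (hODE : -(u x + 2 * ω ^ 2 * u2 x + ω ^ 4 * v4) + η * u x - (u x) ^ 3 = 0) :
    HasDerivAt (swiftHohenbergH ω η u u1 u2 u3) 0 x := by
  have h := ((((h2.pow 2).const_mul (-(ω ^ 4 / 2))).add ((h1.pow 2).const_mul (ω ^ 2))).add
    ((h1.const_mul (ω ^ 4)).mul h3)).add ((((h0.pow 2).const_add (1 - η)).pow 2).const_mul (1 / 4))
  refine h.congr_deriv ?_
  simp only [Pi.pow_apply]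
  push_cast
  linear_combination (-(u1 x)) * hODE

/-- Differentiability is required only in the interior, so `a` or `b` may be the quenching point,
where `u'''` need not be differentiable. -/
lemma eq_of_hasDerivAt_zero_Ioo {f : ℝ → ℝ} {a b : ℝ} (hab : a < b) (hf : Continuous f)
    (hd : ∀ x ∈ Set.Ioo a b, HasDerivAt f 0 x) : f a = f b := by
  obtain ⟨c, -, hc⟩ := exists_hasDerivAt_eq_slope f (fun _ => 0) hab hf.continuousOn hd
  have hne : b - a ≠ 0 := (sub_pos.2 hab).ne'
  field_simp at hc
  linarith

/-- For a `C³(ℝ)` solution `u` of the quenched stationary Swift–Hohenberg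
equation, four times continuously differentiable away from `0`, the Hamiltonians
`H_{δ²}` and `H_{−δ²}` are constant on `(−∞,0)` and `(0,∞)` respectively, and the
quenching-front constraint `−δ²u(0)² − δ² = h_l − h_r` holds. -/
theorem swift_hohenberg_quenching_front_constraint
    (δ ω : ℝ) (hδ : 0 < δ) (u u1 u2 u3 u4 : ℝ → ℝ)
    (hu1 : ∀ x : ℝ, HasDerivAt u (u1 x) x)
    (hu2 : ∀ x : ℝ, HasDerivAt u1 (u2 x) x)
    (hu3 : ∀ x : ℝ, HasDerivAt u2 (u3 x) x)
    (hu3c : Continuous u3)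
    (hu4m : ∀ x ∈ Set.Iio (0 : ℝ), HasDerivAt u3 (u4 x) x)
    (hu4p : ∀ x ∈ Set.Ioi (0 : ℝ), HasDerivAt u3 (u4 x) x)
    (hu4cm : ContinuousOn u4 (Set.Iio (0 : ℝ)))
    (hu4cp : ContinuousOn u4 (Set.Ioi (0 : ℝ)))
    (hODEm : ∀ x ∈ Set.Iio (0 : ℝ),
      -(u x + 2 * ω ^ 2 * u2 x + ω ^ 4 * u4 x) + δ ^ 2 * u x - (u x) ^ 3 = 0)
    (hODEp : ∀ x ∈ Set.Ioi (0 : ℝ),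
      -(u x + 2 * ω ^ 2 * u2 x + ω ^ 4 * u4 x) - δ ^ 2 * u x - (u x) ^ 3 = 0) :
    ∃ hl hr : ℝ,
      (∀ x < (0 : ℝ),
        -(ω ^ 4 / 2) * (u2 x) ^ 2 + ω ^ 2 * (u1 x) ^ 2 + ω ^ 4 * (u1 x) * (u3 x)
          + (1 / 4) * (1 - δ ^ 2 + (u x) ^ 2) ^ 2 = hl) ∧
      (∀ x > (0 : ℝ),
        -(ω ^ 4 / 2) * (u2 x) ^ 2 + ω ^ 2 * (u1 x) ^ 2 + ω ^ 4 * (u1 x) * (u3 x)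
          + (1 / 4) * (1 - (-(δ ^ 2)) + (u x) ^ 2) ^ 2 = hr) ∧
      -(δ ^ 2) * (u 0) ^ 2 - δ ^ 2 = hl - hr := by
  have c0 : Continuous u := continuous_iff_continuousAt.2 fun x => (hu1 x).continuousAt
  have c1 : Continuous u1 := continuous_iff_continuousAt.2 fun x => (hu2 x).continuousAt
  have c2 : Continuous u2 := continuous_iff_continuousAt.2 fun x => (hu3 x).continuousAt
  have hc (η : ℝ) : Continuous (swiftHohenbergH ω η u u1 u2 u3) := by
    unfold swiftHohenbergH
    fun_prop
  refine ⟨swiftHohenbergH ω (δ ^ 2) u u1 u2 u3 0, swiftHohenbergH ω (-(δ ^ 2)) u u1 u2 u3 0,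
    fun x hx => ?_, fun x hx => ?_, ?_⟩
  · exact eq_of_hasDerivAt_zero_Ioo hx (hc _) fun y hy =>
      hasDerivAt_swiftHohenbergH (hu1 y) (hu2 y) (hu3 y) (hu4m y hy.2) (hODEm y hy.2)
  · exact (eq_of_hasDerivAt_zero_Ioo hx (hc _) fun y hy =>
      hasDerivAt_swiftHohenbergH (hu1 y) (hu2 y) (hu3 y) (hu4p y hy.1)
        (by linear_combination hODEp y hy.1)).symm
  · unfold swiftHohenbergH
    ring
end

section
/- Let 0 < τ < 1. There exist ε₀ > 0 and C > 0 such that for every ε ∈ (0, ε₀), every δ with δ/4 ≤ ε ≤ 4δ, every ω > 0 with |ω² − 1| ≤ δ/3, and every κ ∈ ℝ with |κ − 1| ≥ ε^τ and |κ + 1| ≥ ε^τ, one has (1 − ω²κ²)² ≥ C·ε^{2τ}. -/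
/-!
Put `s = ε ^ τ`. The detuning satisfies `|ω ^ 2 - 1| ≤ δ / 3 ≤ 4 * ε / 3`, and
`ε = s * ε ^ (1 - τ)` with `1 - τ > 0`, so for small `ε` the detuning is at most `s / 6`: it is
negligible against the distance `s` of `|κ|` from `1`. Hence the zeros of `1 - ω ^ 2 * κ ^ 2`
stay well away from the far region, where `|1 - ω ^ 2 * κ ^ 2| ≥ s / 2`
(`abs_one_sub_mul_sq_ge`); squaring gives the bound with `C = 1 / 4`.
-/

/-- If `k ≥ 0` has distance at least `s` from `1` and `w` is within `s / 6` of `1`, then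
`1 - w * k ^ 2` is of size at least `s / 2`. -/
lemma abs_one_sub_mul_sq_ge {s w k : ℝ} (hs : 0 < s) (hs1 : s ≤ 1) (hw : |w - 1| ≤ s / 6)
    (hk : 0 ≤ k) (hks : s ≤ |k - 1|) : s / 2 ≤ |1 - w * k ^ 2| := by
  obtain ⟨hw1, hw2⟩ := abs_le.1 hw
  rcases le_abs.1 hks with h | h
  · refine le_abs.2 (Or.inr ?_)
    have h1 : 1 + 2 * s ≤ k ^ 2 := by nlinarith
    have h2 : (1 - s / 6) * (1 + 2 * s) ≤ w * k ^ 2 :=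
      mul_le_mul (by linarith) h1 (by linarith) (by linarith)
    nlinarith
  · refine le_abs.2 (Or.inl ?_)
    have h1 : k ^ 2 ≤ 1 - s := by nlinarith
    have h2 : w * k ^ 2 ≤ (1 + s / 6) * (1 - s) :=
      mul_le_mul (by linarith) h1 (sq_nonneg k) (by linarith)
    nlinarith


/-- Lower bound for the Swift–Hohenberg multiplier on the far frequency
region: for `0 < τ < 1` there exist `ε₀ > 0` and `C > 0` such that for `ε ∈ (0,ε₀)`,
`δ/4 ≤ ε ≤ 4δ`, `ω > 0` with `|ω² − 1| ≤ δ/3`, and `κ` with `|κ∓1| ≥ ε^τ`,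
one has `(1 − ω²κ²)² ≥ C ε^{2τ}`. -/
theorem multiplier_lower_bound_far_region
    (τ : ℝ) (hτ : 0 < τ) (hτ1 : τ < 1) :
    ∃ ε₀ C : ℝ, 0 < ε₀ ∧ 0 < C ∧
      ∀ ε : ℝ, 0 < ε → ε < ε₀ →
      ∀ δ : ℝ, δ / 4 ≤ ε → ε ≤ 4 * δ →
      ∀ ω : ℝ, 0 < ω → |ω ^ 2 - 1| ≤ δ / 3 →
      ∀ κ : ℝ, ε ^ τ ≤ |κ - 1| → ε ^ τ ≤ |κ + 1| →
        C * ε ^ (2 * τ) ≤ (1 - ω ^ 2 * κ ^ 2) ^ 2 := by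
  have hτ' : 0 < 1 - τ := by linarith
  -- This threshold is equivalent to `ε ^ (1 - τ) < 1 / 8`, which also forces `ε < 1`.
  refine ⟨(1 / 8 : ℝ) ^ (1 / (1 - τ)), 1 / 4, by positivity, by norm_num, ?_⟩
  intro ε hε hε0 δ hδ _ ω _ hω κ hκ1 hκ2
  have hε1 : ε ≤ 1 :=
    hε0.le.trans (Real.rpow_le_one (by norm_num) (by norm_num) (by positivity))
  have hsmall : ε ^ (1 - τ) ≤ 1 / 8 := by
    have h := Real.rpow_le_rpow hε.le hε0.le hτ'.le
    rwa [← Real.rpow_mul (by norm_num), one_div_mul_cancel hτ'.ne', Real.rpow_one] at h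
  have hs : 0 < ε ^ τ := Real.rpow_pos_of_pos hε τ
  have hs1 : ε ^ τ ≤ 1 := Real.rpow_le_one hε.le hε1 hτ.le
  have hprod : ε ^ τ * ε ^ (1 - τ) = ε := by
    rw [← Real.rpow_add hε, add_sub_cancel, Real.rpow_one]
  have hw : |ω ^ 2 - 1| ≤ ε ^ τ / 6 := by
    have h := mul_le_mul_of_nonneg_left hsmall hs.le
    linarith
  have hk : ε ^ τ ≤ |(|κ|) - 1| := by
    rcases abs_cases κ with ⟨h, _⟩ | ⟨h, _⟩
    · rwa [h]
    · rwa [h, abs_sub_comm, sub_neg_eq_add, add_comm]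
  have hmain := abs_one_sub_mul_sq_ge hs hs1 hw (abs_nonneg κ) hk
  rw [sq_abs] at hmain
  have hsq : ε ^ (2 * τ) = (ε ^ τ) ^ 2 := by
    rw [mul_comm, Real.rpow_mul hε.le, Real.rpow_two]
  rw [hsq, ← sq_abs (1 - ω ^ 2 * κ ^ 2)]
  nlinarith
end

section
/- For every c > 0 there exists a twice continuously differentiable function χ : ℝ → ℝ satisfying the ordinary differential equation −4π·χ''(x) + (3π/4)·(χ(x)³ − χ(x)) − c·χ'(x) = 0 for all x ∈ ℝ, together with the asymptotic boundary conditions lim_{x→−∞} χ(x) = 1 and lim_{x→+∞} χ(x) = 0. -/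
/-!
With `a = c / (4π)` and `f(x) = (3/16)(x - x³)` the equation is `x'' + a x' + f(x) = 0`: a damped
particle in the potential `V(x) = (3/16)(x²/2 - x⁴/4)`, whose hilltop `x = 1` and well `x = 0` are to
be joined. The front is an orbit of the unstable manifold of the saddle `(1, 0)`; no sign condition
at `0` is claimed, so every `c > 0` is allowed, including speeds for which the front oscillates.

The phase-plane field is replaced by a bounded, globally Lipschitz one that agrees with it on the
box `|x|, |v| ≤ 1`. This gives global solutions (`exists_sol`) and continuous dependence on the
initial point (`gronwall`). The clamped system has its own energy, nonincreasing along all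
solutions, which is at least `V(1) = 3/64` on the boundary of the box; hence solutions in the box
with energy below `3/64` never leave it (`trap`).

The unstable manifold is obtained by compactness. Released at rest from `(1 - ε, 0)`, a solution
moves left, and it must reach `x = 1/2`, since `v + a x` is bounded and has derivative `-f(x)`
(`escape`); the time it needs tends to infinity as `ε → 0`, because `(1, 0)` is an equilibrium
(`approx`). Time-shifting so that the crossing occurs at time `0` and passing to a limit of the
crossing points yields a solution that stays in a compact region, with `x` nonincreasing, for all
`t ≤ 0` (`exists_backward`). Then `x → 1` at `-∞`, again by `escape` (`tendsto_atBot_one`). Its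
energy is strictly below `3/64` at time `0` (`energy_zero_lt`), so forward in time it is trapped in
the well, where a strict Lyapunov function makes it converge to `0` exponentially
(`tendsto_atTop_zero`).
-/

open Set Filter Topology

namespace EnvelopeFront

/-! ### The clamped phase-plane system -/

/-- The retraction of `ℝ` onto `[-1, 1]`. -/
noncomputable def clamp (x : ℝ) : ℝ := max (-1) (min 1 x)

/-- The reaction term `f(x) = (3/16)(x - x³)`. -/
noncomputable def reac (x : ℝ) : ℝ := 3 / 16 * (x - x ^ 3)

/-- The phase-plane vector field of `x'' + a x' + f(x) = 0`, with both coordinates clamped to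
`[-1, 1]`. It is bounded and globally Lipschitz, and agrees with `(v, -a v - f(x))` on the closed
unit ball of the sup norm of `ℝ × ℝ`. -/
noncomputable def field (a : ℝ) (p : ℝ × ℝ) : ℝ × ℝ :=
  (clamp p.2, -a * clamp p.2 - reac (clamp p.1))

/-- `γ` is a solution, for all times, of the clamped phase-plane system. -/
def IsSol (a : ℝ) (γ : ℝ → ℝ × ℝ) : Prop := ∀ t, HasDerivAt γ (field a (γ t)) t

/-- The energy of the clamped system: kinetic and potential terms are the primitives of the clamped
velocity and of the clamped reaction term, so that it dissipates along every solution, also outside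
the region where the clamping is inactive. -/
noncomputable def energy (p : ℝ × ℝ) : ℝ :=
  (∫ s in (0 : ℝ)..p.2, clamp s) + ∫ s in (0 : ℝ)..p.1, reac (clamp s)

lemma clamp_abs (x : ℝ) : |clamp x| ≤ 1 := by
  unfold clamp; rw [abs_le]; constructor <;> simp

lemma clamp_of_abs {x : ℝ} (h : |x| ≤ 1) : clamp x = x := by
  rw [abs_le] at h; unfold clamp; rw [min_eq_right h.2, max_eq_right h.1]

lemma clamp_lip (x y : ℝ) : |clamp x - clamp y| ≤ |x - y| := by
  unfold clamp
  grind [abs_le]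

lemma clamp_cont : Continuous clamp := by unfold clamp; fun_prop

lemma reac_cont : Continuous reac := by unfold reac; fun_prop

lemma reac_lip {x y : ℝ} (hx : |x| ≤ 1) (hy : |y| ≤ 1) : |reac x - reac y| ≤ |x - y| := by
  have e : reac x - reac y = 3 / 16 * (1 - (x ^ 2 + x * y + y ^ 2)) * (x - y) := by
    unfold reac; ring
  rw [e, abs_mul]
  rw [abs_le] at hx hy
  have : |3 / 16 * (1 - (x ^ 2 + x * y + y ^ 2))| ≤ 1 := by
    rw [abs_le]; constructor <;> nlinarith [sq_nonneg (x + y), sq_nonneg (x - y)]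
  nlinarith [abs_nonneg (x - y)]

lemma field_lip {a : ℝ} (ha : 0 < a) : LipschitzWith (a + 1).toNNReal (field a) := by
  refine LipschitzWith.of_dist_le_mul fun p q => ?_
  rw [Real.coe_toNNReal _ (by linarith), Prod.dist_eq, Prod.dist_eq]
  simp only [Real.dist_eq, field]
  have h1 := clamp_lip p.2 q.2
  have h2 := (reac_lip (clamp_abs p.1) (clamp_abs q.1)).trans (clamp_lip p.1 q.1)
  set M := max |p.1 - q.1| |p.2 - q.2| with hM
  have m1 : |p.1 - q.1| ≤ M := le_max_left _ _
  have m2 : |p.2 - q.2| ≤ M := le_max_right _ _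
  have m0 : 0 ≤ M := (abs_nonneg _).trans m1
  refine max_le (by nlinarith) ?_
  have e : -a * clamp p.2 - reac (clamp p.1) - (-a * clamp q.2 - reac (clamp q.1))
      = -(a * (clamp p.2 - clamp q.2)) - (reac (clamp p.1) - reac (clamp q.1)) := by ring
  rw [e]
  refine (abs_sub _ _).trans ?_
  rw [abs_neg, abs_mul, abs_of_pos ha]
  nlinarith

lemma field_norm_le {a : ℝ} (ha : 0 < a) (p : ℝ × ℝ) : ‖field a p‖ ≤ a + 1 := by
  have h1 := clamp_abs p.2
  have h2 := clamp_abs p.1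
  have h3 : |reac (clamp p.1)| ≤ 1 := by
    have := reac_lip h2 (y := 0) (by simp)
    rw [show reac 0 = 0 by simp [reac], sub_zero, sub_zero] at this
    exact this.trans h2
  rw [Prod.norm_def]
  simp only [field, Real.norm_eq_abs]
  refine max_le (by linarith) ?_
  refine (abs_sub _ _).trans ?_
  rw [abs_mul, abs_neg, abs_of_pos ha]
  nlinarith

lemma IsSol.comp_add {a : ℝ} {γ : ℝ → ℝ × ℝ} (h : IsSol a γ) (s : ℝ) :
    IsSol a (fun t => γ (t + s)) := fun t => (h (t + s)).comp_add_const t s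

lemma IsSol.continuous {a : ℝ} {γ : ℝ → ℝ × ℝ} (h : IsSol a γ) : Continuous γ :=
  continuous_iff_continuousAt.2 fun t => (h t).continuousAt

/-! ### Existence and continuous dependence -/

/-- Global existence: the field is bounded, so Picard-Lindelöf applies on every interval
`[-n, n]`, and uniqueness glues the solutions obtained. -/
lemma exists_sol {a : ℝ} (ha : 0 < a) (p : ℝ × ℝ) : ∃ γ, IsSol a γ ∧ γ 0 = p := by
  have key : ∀ T : ℝ, 0 < T → ∃ γ : ℝ → ℝ × ℝ, γ 0 = p ∧
      ∀ t ∈ Ioo (-T) T, HasDerivAt γ (field a (γ t)) t := by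
    intro T hT
    have hP : IsPicardLindelof (fun _ : ℝ => field a) (tmin := -T) (tmax := T)
        ⟨0, by constructor <;> linarith⟩ p ((a + 1) * T).toNNReal 0 (a + 1).toNNReal
        (a + 1).toNNReal := by
      refine ⟨fun t _ => (field_lip ha).lipschitzOnWith, fun x _ => continuousOn_const, ?_, ?_⟩
      · intro t _ x _
        rw [Real.coe_toNNReal _ (by linarith)]
        exact field_norm_le ha x
      · rw [Real.coe_toNNReal _ (by linarith), Real.coe_toNNReal _ (by positivity)]
        simp
    obtain ⟨γ, h0, h⟩ := hP.exists_eq_forall_mem_Icc_hasDerivWithinAt₀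
    exact ⟨γ, h0, fun t ht => (h t (Ioo_subset_Icc_self ht)).hasDerivAt (Icc_mem_nhds ht.1 ht.2)⟩
  choose! G G0 GD using key
  have agree : ∀ S T t : ℝ, 0 < S → S ≤ T → t ∈ Ioo (-S) S → G T t = G S t := by
    intro S T t hS hST ht
    have := ODE_solution_unique_of_mem_Ioo (v := fun _ => field a) (s := fun _ => univ)
      (t₀ := 0) (a := -S) (b := S) (f := G T) (g := G S) (K := (a + 1).toNNReal)
      (fun t _ => (field_lip ha).lipschitzOnWith) ⟨by linarith, hS⟩
      (fun t ht => ⟨GD T (by linarith) t ⟨by linarith [ht.1], by linarith [ht.2]⟩, mem_univ _⟩)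
      (fun t ht => ⟨GD S hS t ht, mem_univ _⟩) (by rw [G0 T (by linarith), G0 S hS])
    exact this ht
  refine ⟨fun t => G (|t| + 1) t, fun t => ?_, by simpa using G0 1 one_pos⟩
  have hd := GD (|t| + 2) (by positivity) t
    ⟨by linarith [neg_abs_le t], by linarith [le_abs_self t]⟩
  have hv : G (|t| + 2) t = G (|t| + 1) t :=
    agree _ _ _ (by positivity) (by linarith)
      ⟨by linarith [neg_abs_le t], by linarith [le_abs_self t]⟩
  rw [hv] at hd
  refine hd.congr_of_eventuallyEq ?_
  have : ∀ᶠ s in 𝓝 t, |s| < |t| + 1 :=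
    continuous_abs.continuousAt.eventually_lt continuousAt_const (by linarith)
  filter_upwards [this] with s hs
  exact (agree _ _ _ (by positivity) (by linarith)
      ⟨by linarith [neg_abs_le s], by linarith [le_abs_self s]⟩).symm

/-- Continuous dependence on the initial condition, in both time directions. -/
lemma gronwall {a : ℝ} (ha : 0 < a) {γ δ : ℝ → ℝ × ℝ} (hγ : IsSol a γ) (hδ : IsSol a δ) (t : ℝ) :
    dist (γ t) (δ t) ≤ dist (γ 0) (δ 0) * Real.exp ((a + 1) * |t|) := by
  have hK : ((a + 1).toNNReal : ℝ) = a + 1 := Real.coe_toNNReal _ (by linarith)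
  rcases le_total 0 t with ht | ht
  · have := dist_le_of_trajectories_ODE (v := fun _ => field a) (K := (a + 1).toNNReal)
      (f := γ) (g := δ) (a := 0) (b := t) (fun _ => field_lip ha)
      hγ.continuous.continuousOn (fun t _ => (hγ t).hasDerivWithinAt)
      hδ.continuous.continuousOn (fun t _ => (hδ t).hasDerivWithinAt) le_rfl t ⟨ht, le_rfl⟩
    rw [abs_of_nonneg ht]
    rwa [hK, sub_zero] at this
  · have rev : ∀ {γ : ℝ → ℝ × ℝ}, IsSol a γ → ∀ s,
        HasDerivAt (fun s => γ (-s)) (-field a (γ (-s))) s := by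
      intro γ hγ s
      have := HasDerivAt.scomp s (hγ (-s)) (hasDerivAt_neg s)
      rw [neg_one_smul] at this
      exact this
    have := dist_le_of_trajectories_ODE (v := fun _ p => -field a p) (K := (a + 1).toNNReal)
      (f := fun s => γ (-s)) (g := fun s => δ (-s)) (a := 0) (b := -t)
      (fun _ => (field_lip ha).neg)
      (hγ.continuous.comp continuous_neg).continuousOn (fun t _ => (rev hγ t).hasDerivWithinAt)
      (hδ.continuous.comp continuous_neg).continuousOn (fun t _ => (rev hδ t).hasDerivWithinAt)
      le_rfl (-t) ⟨by linarith, le_rfl⟩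
    simpa [hK, abs_of_nonpos ht] using this

/-! ### Energy and trapping -/

lemma energy_of_norm_le {p : ℝ × ℝ} (h : ‖p‖ ≤ 1) :
    energy p = p.2 ^ 2 / 2 + 3 / 16 * (p.1 ^ 2 / 2 - p.1 ^ 4 / 4) := by
  have h1 : |p.1| ≤ 1 := (norm_fst_le p).trans h
  have h2 : |p.2| ≤ 1 := (norm_snd_le p).trans h
  have aux : ∀ y : ℝ, |y| ≤ 1 → ∀ s ∈ uIcc 0 y, clamp s = s := by
    intro y hy s hs
    refine clamp_of_abs ?_
    have := abs_sub_left_of_mem_uIcc hs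
    simp only [sub_zero] at this
    exact this.trans hy
  unfold energy
  rw [intervalIntegral.integral_congr (f := clamp) (g := fun s => s) (fun s hs => aux _ h2 s hs),
    intervalIntegral.integral_congr (f := fun s => reac (clamp s)) (g := fun s => reac s)
      (fun s hs => by simp only [aux _ h1 s hs])]
  simp only [reac]
  rw [intervalIntegral.integral_const_mul, intervalIntegral.integral_sub
    ((by fun_prop : Continuous fun x : ℝ => x).intervalIntegrable _ _) ((by fun_prop : Continuous fun x : ℝ => x ^ 3).intervalIntegrable _ _)]
  simp only [integral_id, integral_pow]
  norm_num

lemma energy_hasDerivAt {a : ℝ} {γ : ℝ → ℝ × ℝ} (h : IsSol a γ) (t : ℝ) :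
    HasDerivAt (fun t => energy (γ t)) (-a * clamp (γ t).2 ^ 2) t := by
  have prim : ∀ {g : ℝ → ℝ}, Continuous g → ∀ y, HasDerivAt (fun u => ∫ s in (0 : ℝ)..u, g s)
      (g y) y := fun hg y => intervalIntegral.integral_hasDerivAt_right (hg.intervalIntegrable _ _)
        hg.aestronglyMeasurable.stronglyMeasurableAtFilter hg.continuousAt
  have d1 := (prim (reac_cont.comp clamp_cont) (γ t).1).comp t (h t).fst
  have d2 := (prim clamp_cont (γ t).2).comp t (h t).snd
  refine (d2.add d1).congr_deriv ?_
  simp only [field, Function.comp]; ring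

lemma energy_antitone {a : ℝ} (ha : 0 < a) {γ : ℝ → ℝ × ℝ} (h : IsSol a γ) :
    Antitone fun t => energy (γ t) := by
  refine antitone_of_deriv_nonpos (fun t => (energy_hasDerivAt h t).differentiableAt) fun t => ?_
  rw [(energy_hasDerivAt h t).deriv]
  nlinarith [sq_nonneg (clamp (γ t).2)]

/-- On the boundary of the box the energy is at least its value `3/64` at the saddle `(1, 0)`. -/
lemma energy_boundary {p : ℝ × ℝ} (h : ‖p‖ = 1) : 3 / 64 ≤ energy p := by
  rw [energy_of_norm_le h.le]
  have h1 : |p.1| ≤ 1 := (norm_fst_le p).trans h.le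
  have h1' : p.1 ^ 2 ≤ 1 := by rwa [sq_le_one_iff_abs_le_one]
  rw [Prod.norm_def] at h
  rcases max_choice ‖p.1‖ ‖p.2‖ with e | e <;> rw [e, Real.norm_eq_abs] at h
  · have : p.1 ^ 2 = 1 := by rw [← sq_abs, h]; norm_num
    nlinarith [sq_nonneg p.2]
  · have : p.2 ^ 2 = 1 := by rw [← sq_abs, h]; norm_num
    nlinarith [sq_nonneg p.1]

/-- The sublevel set of the energy inside the box is forward invariant. -/
lemma trap {a : ℝ} (ha : 0 < a) {γ : ℝ → ℝ × ℝ} (h : IsSol a γ) (h0 : ‖γ 0‖ < 1)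
    (hE : energy (γ 0) < 3 / 64) {t : ℝ} (ht : 0 ≤ t) : ‖γ t‖ < 1 := by
  by_contra! hc
  obtain ⟨s, hs, e⟩ := intermediate_value_Icc ht h.continuous.norm.continuousOn ⟨h0.le, hc⟩
  have := energy_antitone ha h hs.1
  have := energy_boundary e
  simp only at *
  linarith

lemma field_of_norm_le {a : ℝ} {p : ℝ × ℝ} (h : ‖p‖ ≤ 1) :
    field a p = (p.2, -a * p.2 - reac p.1) := by
  rw [field, clamp_of_abs ((norm_fst_le p).trans h), clamp_of_abs ((norm_snd_le p).trans h)]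

lemma IsSol.fst {a : ℝ} {γ : ℝ → ℝ × ℝ} (h : IsSol a γ) {t : ℝ} (ht : ‖γ t‖ ≤ 1) :
    HasDerivAt (fun t => (γ t).1) (γ t).2 t := by
  have := (h t).fst
  rwa [field_of_norm_le ht] at this

lemma IsSol.snd {a : ℝ} {γ : ℝ → ℝ × ℝ} (h : IsSol a γ) {t : ℝ} (ht : ‖γ t‖ ≤ 1) :
    HasDerivAt (fun t => (γ t).2) (-a * (γ t).2 - reac (γ t).1) t := by
  have := (h t).snd
  rwa [field_of_norm_le ht] at this

/-! ### The unstable manifold of the saddle -/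

/-- The part of the phase plane swept out by the decreasing part of the front: `1/2 ≤ x ≤ 1`,
`-1 ≤ v ≤ 0`, with energy at most that of the saddle `(1, 0)`. -/
def region : Set (ℝ × ℝ) :=
  {p | ‖p‖ ≤ 1 ∧ 1 / 2 ≤ p.1 ∧ p.2 ≤ 0 ∧
    p.2 ^ 2 / 2 + 3 / 16 * (p.1 ^ 2 / 2 - p.1 ^ 4 / 4) ≤ 3 / 64}

lemma region_closed : IsClosed region := by
  simp only [region, ofPred_and]
  refine IsClosed.inter ?_ (IsClosed.inter ?_ (IsClosed.inter ?_ ?_)) <;>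
    exact isClosed_le (by fun_prop) (by fun_prop)

/-- An orbit cannot stay long in `1/2 ≤ x ≤ 1 - ε`, since there `v + a x`, whose derivative is
`-f(x)`, decreases at a definite rate. -/
lemma escape {a : ℝ} (ha : 0 < a) {γ : ℝ → ℝ × ℝ} (h : IsSol a γ) {s T ε : ℝ} (hT : 0 ≤ T)
    (hε : 0 < ε)
    (hb : ∀ t ∈ Icc s (s + T), ‖γ t‖ ≤ 1 ∧ 1 / 2 ≤ (γ t).1 ∧ (γ t).1 ≤ 1 - ε) :
    9 / 64 * ε * T ≤ 2 * (1 + a) := by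
  have hd : ∀ t ∈ Icc s (s + T),
      HasDerivAt (fun t => (γ t).2 + a * (γ t).1 + 9 / 64 * ε * t)
        (-reac (γ t).1 + 9 / 64 * ε) t := by
    intro t ht
    have h1 := h.fst (hb t ht).1
    have h2 := h.snd (hb t ht).1
    refine ((h2.add (h1.const_mul a)).add ((hasDerivAt_id t).const_mul (9 / 64 * ε))).congr_deriv ?_
    ring
  have anti := antitoneOn_of_hasDerivWithinAt_nonpos (convex_Icc s (s + T))
    (fun t ht => (hd t ht).continuousAt.continuousWithinAt)
    (fun t ht => (hd t (interior_subset ht)).hasDerivWithinAt) (fun t ht => by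
      obtain ⟨-, h1, h2⟩ := hb t (interior_subset ht)
      unfold reac
      have : 1 / 2 * (3 / 2) ≤ (γ t).1 * (1 + (γ t).1) := by nlinarith
      have : 1 / 2 * (3 / 2) * ε ≤ (γ t).1 * (1 + (γ t).1) * (1 - (γ t).1) :=
        mul_le_mul this (by linarith) hε.le (by nlinarith)
      nlinarith)
  have := anti (left_mem_Icc.2 (by linarith)) (right_mem_Icc.2 (by linarith)) (by linarith)
  simp only at this
  have b : ∀ t ∈ Icc s (s + T), |(γ t).2 + a * (γ t).1| ≤ 1 + a := by
    intro t ht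
    have h1 : |(γ t).1| ≤ 1 := (norm_fst_le _).trans (hb t ht).1
    have h2 : |(γ t).2| ≤ 1 := (norm_snd_le _).trans (hb t ht).1
    refine (abs_add_le _ _).trans ?_
    rw [abs_mul, abs_of_pos ha]
    nlinarith
  have b1 := abs_le.1 (b s (left_mem_Icc.2 (by linarith)))
  have b2 := abs_le.1 (b (s + T) (right_mem_Icc.2 (by linarith)))
  nlinarith [b1.2, b2.1]

/-- As long as `0 ≤ x`, an orbit starting at rest has `v ≤ 0`, because `e^{at} v` has derivative
`-e^{at} f(x)`. -/
lemma snd_nonpos {a : ℝ} {γ : ℝ → ℝ × ℝ} (h : IsSol a γ) (h0 : (γ 0).2 = 0) {T : ℝ}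
    (hT : 0 ≤ T) (hb : ∀ t ∈ Icc 0 T, ‖γ t‖ ≤ 1 ∧ 0 ≤ (γ t).1) : (γ T).2 ≤ 0 := by
  have hd : ∀ t ∈ Icc 0 T, HasDerivAt (fun t => Real.exp (a * t) * (γ t).2)
      (-(Real.exp (a * t) * reac (γ t).1)) t := by
    intro t ht
    have h1 : HasDerivAt (fun t => Real.exp (a * t)) (Real.exp (a * t) * a) t := by
      simpa using ((hasDerivAt_id t).const_mul a).exp
    refine (h1.mul (h.snd (hb t ht).1)).congr_deriv ?_
    ring
  have anti := antitoneOn_of_hasDerivWithinAt_nonpos (convex_Icc 0 T)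
    (fun t ht => (hd t ht).continuousAt.continuousWithinAt)
    (fun t ht => (hd t (interior_subset ht)).hasDerivWithinAt) (fun t ht => by
      obtain ⟨h1, h2⟩ := hb t (interior_subset ht)
      have h3 : (γ t).1 ≤ 1 := (le_abs_self _).trans ((norm_fst_le _).trans h1)
      have : 0 ≤ reac (γ t).1 := by
        have : reac (γ t).1 = 3 / 16 * ((γ t).1 * (1 - (γ t).1) * (1 + (γ t).1)) := by
          unfold reac; ring
        rw [this]
        have : 0 ≤ 1 - (γ t).1 := by linarith
        positivity
      have := mul_nonneg (Real.exp_pos (a * t)).le this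
      linarith)
  have := anti (left_mem_Icc.2 hT) (right_mem_Icc.2 hT) hT
  simp only [h0, mul_zero] at this
  have := Real.exp_pos (a * T)
  by_contra! hc
  nlinarith [mul_pos this hc]

lemma fst_antitoneOn {a : ℝ} {γ : ℝ → ℝ × ℝ} (h : IsSol a γ) {s : Set ℝ} (hs : Convex ℝ s)
    (hb : ∀ t ∈ s, ‖γ t‖ ≤ 1 ∧ (γ t).2 ≤ 0) : AntitoneOn (fun t => (γ t).1) s :=
  antitoneOn_of_hasDerivWithinAt_nonpos hs
    (fun t ht => (h.fst (hb t ht).1).continuousAt.continuousWithinAt)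
    (fun t ht => (h.fst (hb t (interior_subset ht)).1).hasDerivWithinAt)
    (fun t ht => (hb t (interior_subset ht)).2)

/-- Released at rest close enough to the saddle `(1, 0)`, an orbit needs at least time `N` to
reach `x = 1/2`; shifting time gives an orbit through `x = 1/2` at time `0` that was in `region`
during `[-N, 0]`. -/
lemma approx {a : ℝ} (ha : 0 < a) (N : ℝ) : ∃ δ : ℝ → ℝ × ℝ, IsSol a δ ∧ (δ 0).1 = 1 / 2 ∧
    ∀ t ∈ Icc (-N) 0, δ t ∈ region := by
  wlog hN : 0 ≤ N generalizing N
  · obtain ⟨δ, h1, h2, -⟩ := this 0 le_rfl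
    exact ⟨δ, h1, h2, fun t ht => by linarith [ht.1, ht.2]⟩
  -- Chosen so that the distance to `(1, 0)` is still at most `1/4` at time `N`, by `gronwall`.
  set ε : ℝ := Real.exp (-((a + 1) * N)) / 4 with hεdef
  have hε : 0 < ε := by positivity
  have hε4 : ε ≤ 1 / 4 := by
    have : Real.exp (-((a + 1) * N)) ≤ 1 := Real.exp_le_one_iff.2 (by
      have : 0 ≤ (a + 1) * N := by positivity
      linarith)
    rw [hεdef]; linarith
  obtain ⟨γ, h, h0⟩ := exists_sol ha (1 - ε, 0)
  have n0 : ‖γ 0‖ < 1 := by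
    rw [h0, Prod.norm_def]
    simp only [norm_zero, Real.norm_eq_abs]
    rw [abs_of_pos (by linarith)]
    exact max_lt (by linarith) one_pos
  have e0 : energy (γ 0) < 3 / 64 := by
    rw [energy_of_norm_le n0.le, h0]
    simp only
    have : 0 < 1 - (1 - ε) ^ 2 := by nlinarith
    nlinarith [mul_pos this this]
  have box : ∀ t, 0 ≤ t → ‖γ t‖ < 1 := fun t ht => trap ha h n0 e0 ht
  have x0 : (γ 0).1 = 1 - ε := by rw [h0]
  have v0 : (γ 0).2 = 0 := by rw [h0]
  have cont : Continuous fun t => (γ t).1 := h.continuous.fst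
  obtain ⟨t₁, ht₁, hx₁⟩ : ∃ t, 0 ≤ t ∧ (γ t).1 ≤ 1 / 2 := by
    by_contra! hc
    have hv : ∀ t, 0 ≤ t → (γ t).2 ≤ 0 := fun t ht => snd_nonpos h v0 ht fun s hs =>
      ⟨(box s hs.1).le, by linarith [hc s hs.1]⟩
    have anti := fst_antitoneOn h (convex_Ici (0 : ℝ)) fun t ht => ⟨(box t ht).le, hv t ht⟩
    have := escape ha h (s := 0) (T := 2 * (1 + a) / (9 / 64 * ε) + 1) (by positivity) hε
      fun t ht => ⟨(box t ht.1).le, (hc t ht.1).le, x0 ▸ anti (mem_Ici.2 le_rfl) ht.1 ht.1⟩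
    rw [mul_add, mul_div_cancel₀ _ (by positivity)] at this
    nlinarith
  set S : Set ℝ := {t | 0 ≤ t ∧ (γ t).1 ≤ 1 / 2} with hS
  have Sc : IsClosed S := (isClosed_le continuous_const continuous_id).inter
    (isClosed_le cont continuous_const)
  have Sb : BddBelow S := ⟨0, fun t ht => ht.1⟩
  obtain ⟨T, hTS, hTmin⟩ : ∃ T ∈ S, ∀ t ∈ S, T ≤ t :=
    ⟨sInf S, Sc.csInf_mem ⟨t₁, ht₁, hx₁⟩ Sb, fun t ht => csInf_le Sb ht⟩
  have hT0 : 0 ≤ T := hTS.1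
  have xT : (γ T).1 = 1 / 2 := by
    obtain ⟨s, hs, e⟩ := intermediate_value_Icc' hT0 cont.continuousOn
      (show (1 / 2 : ℝ) ∈ Icc _ _ from ⟨hTS.2, by rw [x0]; linarith⟩)
    have : T = s := le_antisymm (hTmin s ⟨hs.1, e.le⟩) hs.2
    rw [this]; exact e
  have xlow : ∀ t ∈ Icc 0 T, 1 / 2 ≤ (γ t).1 := by
    intro t ht
    by_contra! hc
    have := le_antisymm (hTmin t ⟨ht.1, hc.le⟩) ht.2
    rw [← this] at hc
    linarith
  have vneg : ∀ t ∈ Icc 0 T, (γ t).2 ≤ 0 := fun t ht => snd_nonpos h v0 ht.1 fun s hs =>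
    ⟨(box s hs.1).le, by linarith [xlow s ⟨hs.1, hs.2.trans ht.2⟩]⟩
  have hNT : N ≤ T := by
    by_contra! hc
    have hconst : IsSol a fun _ => ((1 : ℝ), (0 : ℝ)) := by
      intro t
      rw [field_of_norm_le (by simp [Prod.norm_def])]
      exact (hasDerivAt_const t ((1 : ℝ), (0 : ℝ))).congr_deriv (by ext <;> simp [reac])
    have g := gronwall ha h hconst T
    have d0 : dist (γ 0) ((1 : ℝ), (0 : ℝ)) = ε := by
      rw [h0, Prod.dist_eq, Real.dist_eq]
      simp [abs_of_pos hε, hε.le]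
    have dT : 1 / 2 ≤ dist (γ T) ((1 : ℝ), (0 : ℝ)) := by
      rw [Prod.dist_eq, Real.dist_eq, xT]
      refine le_max_of_le_left ?_
      norm_num [abs_of_neg]
    rw [d0, abs_of_nonneg hT0, hεdef] at g
    have : Real.exp (-((a + 1) * N)) * Real.exp ((a + 1) * T) ≤ 1 := by
      rw [← Real.exp_add]
      exact Real.exp_le_one_iff.2 (by nlinarith)
    linarith
  refine ⟨fun t => γ (t + T), h.comp_add T, by simpa using xT, fun t ht => ?_⟩
  have ht' : t + T ∈ Icc 0 T := ⟨by linarith [ht.1], by linarith [ht.2]⟩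
  have bx := (box _ ht'.1).le
  refine ⟨bx, xlow _ ht', vneg _ ht', ?_⟩
  rw [← energy_of_norm_le bx]
  exact (energy_antitone ha h ht'.1).trans e0.le

/-- A half-orbit of the unstable manifold of `(1, 0)`: a limit of the orbits of `approx`. -/
lemma exists_backward {a : ℝ} (ha : 0 < a) : ∃ γ : ℝ → ℝ × ℝ, IsSol a γ ∧ (γ 0).1 = 1 / 2 ∧
    ∀ t ≤ 0, γ t ∈ region := by
  choose δ hδ hδ0 hδR using fun n : ℕ => approx ha n
  have hb : ∀ n, δ n 0 ∈ Metric.closedBall (0 : ℝ × ℝ) 1 := fun n => by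
    rw [mem_closedBall_zero_iff]
    exact (hδR n 0 ⟨by simp, le_rfl⟩).1
  obtain ⟨q, -, φ, hφ, hq⟩ := (isCompact_closedBall (0 : ℝ × ℝ) 1).tendsto_subseq hb
  obtain ⟨γ, hγ, hγ0⟩ := exists_sol ha q
  have lim : ∀ t, Tendsto (fun n => δ (φ n) t) atTop (𝓝 (γ t)) := by
    intro t
    rw [tendsto_iff_dist_tendsto_zero]
    have h1 : Tendsto (fun n => dist (δ (φ n) 0) (γ 0) * Real.exp ((a + 1) * |t|)) atTop
        (𝓝 0) := by
      have := (tendsto_iff_dist_tendsto_zero.1 hq).mul_const (Real.exp ((a + 1) * |t|))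
      rw [zero_mul, ← hγ0] at this
      exact this
    exact squeeze_zero (fun _ => dist_nonneg) (fun n => gronwall ha (hδ _) hγ t) h1
  refine ⟨γ, hγ, ?_, fun t ht => ?_⟩
  · refine tendsto_nhds_unique ((continuous_fst.tendsto _).comp (lim 0)) ?_
    simp only [Function.comp_def, hδ0]
    exact tendsto_const_nhds
  · refine region_closed.mem_of_tendsto (lim t) ?_
    filter_upwards [eventually_ge_atTop ⌈-t⌉₊] with n hn
    refine hδR _ t ⟨?_, ht⟩
    have h1 : ((⌈-t⌉₊ : ℕ) : ℝ) ≤ (φ n : ℝ) := by exact_mod_cast hn.trans (hφ.id_le n)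
    linarith [Nat.le_ceil (-t)]

/-! ### Limits at both ends -/

lemma tendsto_atBot_one {a : ℝ} (ha : 0 < a) {γ : ℝ → ℝ × ℝ} (h : IsSol a γ)
    (hR : ∀ t ≤ 0, γ t ∈ region) : Tendsto (fun t => (γ t).1) atBot (𝓝 1) := by
  have anti := fst_antitoneOn h (convex_Iic (0 : ℝ)) fun t ht => ⟨(hR t ht).1, (hR t ht).2.2.1⟩
  have le1 : ∀ t ≤ 0, (γ t).1 ≤ 1 := fun t ht =>
    (le_abs_self _).trans ((norm_fst_le _).trans (hR t ht).1)
  rw [tendsto_order]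
  refine ⟨fun b hb => ?_, fun b hb => ?_⟩
  · obtain ⟨t₁, ht₁, hx⟩ : ∃ t ≤ 0, b < (γ t).1 := by
      by_contra! hc
      set T := 2 * (1 + a) / (9 / 64 * (1 - b)) + 1 with hT
      have hb' : 0 < 1 - b := by linarith
      have hT0 : 0 ≤ T := by positivity
      have := escape ha h (s := -T) (T := T) hT0 hb' fun t ht => by
        have ht0 : t ≤ 0 := by linarith [ht.2]
        exact ⟨(hR t ht0).1, (hR t ht0).2.1, by linarith [hc t ht0]⟩
      rw [hT, mul_add, mul_div_cancel₀ _ (by positivity)] at this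
      nlinarith
    filter_upwards [eventually_le_atBot t₁] with t ht
    exact hx.trans_le (anti (ht.trans ht₁) ht₁ ht)
  · filter_upwards [eventually_le_atBot 0] with t ht
    exact (le1 t ht).trans_lt hb

/-- The energy at time `0` is strictly below that of the saddle: otherwise nothing is dissipated
for `t ≤ 0`, so `x` is constant there, which is incompatible with `x → 1`. -/
lemma energy_zero_lt {a : ℝ} (ha : 0 < a) {γ : ℝ → ℝ × ℝ} (h : IsSol a γ) (h0 : (γ 0).1 = 1 / 2)
    (hR : ∀ t ≤ 0, γ t ∈ region) : energy (γ 0) < 3 / 64 := by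
  have le : ∀ t ≤ 0, energy (γ t) ≤ 3 / 64 := fun t ht => by
    rw [energy_of_norm_le (hR t ht).1]; exact (hR t ht).2.2.2
  refine (le 0 le_rfl).lt_of_ne fun he => ?_
  have eq : ∀ t ≤ 0, energy (γ t) = 3 / 64 := fun t ht =>
    le_antisymm (le t ht) (he ▸ energy_antitone ha h ht)
  have v0 : ∀ t < 0, (γ t).2 = 0 := by
    intro t ht
    have h1 : HasDerivAt (fun t => energy (γ t)) 0 t :=
      (hasDerivAt_const t (3 / 64 : ℝ)).congr_of_eventuallyEq (by
        filter_upwards [eventually_le_nhds ht] with s hs using eq s hs)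
    have h2 := (energy_hasDerivAt h t).unique h1
    rw [clamp_of_abs ((norm_snd_le _).trans (hR t ht.le).1)] at h2
    have : (γ t).2 ^ 2 = 0 := by
      rcases mul_eq_zero.1 h2 with h3 | h3
      · linarith
      · exact h3
    exact pow_eq_zero_iff two_ne_zero |>.1 this
  have mono : MonotoneOn (fun t => (γ t).1) (Iic 0) := by
    refine monotoneOn_of_hasDerivWithinAt_nonneg (f' := fun t => (γ t).2) (convex_Iic 0)
      h.continuous.fst.continuousOn
      (fun t ht => (h.fst (hR t (mem_Iic.1 (interior_subset ht))).1).hasDerivWithinAt)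
      fun t ht => ?_
    rw [interior_Iic] at ht
    exact (v0 t ht).ge
  have : (1 : ℝ) ≤ 1 / 2 := le_of_tendsto (tendsto_atBot_one ha h hR) (by
    filter_upwards [eventually_le_atBot 0] with t ht
    exact h0 ▸ mono ht (mem_Iic.2 le_rfl) ht)
  norm_num at this

/-- Inside the potential well the orbit converges to the origin. The function
`W = E + (a/2)(x v + a x²/2)` is a strict Lyapunov function, with `W' = -(a/2)(v² + x f(x))`, and
it is comparable to `x² + v²`; so `W` decays exponentially. -/
lemma tendsto_atTop_zero {a : ℝ} (ha : 0 < a) {γ : ℝ → ℝ × ℝ} (h : IsSol a γ)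
    (h0 : energy (γ 0) < 3 / 64) (hb : ∀ t, 0 ≤ t → ‖γ t‖ ≤ 1) :
    Tendsto (fun t => (γ t).1) atTop (𝓝 0) := by
  set d : ℝ := 3 / 64 - energy (γ 0) with hd
  have hd0 : 0 < d := by linarith
  set W : ℝ → ℝ := fun t => (γ t).2 ^ 2 / 2 + 3 / 16 * ((γ t).1 ^ 2 / 2 - (γ t).1 ^ 4 / 4) +
    a / 2 * ((γ t).1 * (γ t).2 + a * (γ t).1 ^ 2 / 2) with hW
  have sq : ∀ t, 0 ≤ t → (γ t).1 ^ 2 ≤ 1 := fun t ht => by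
    rw [sq_le_one_iff_abs_le_one]; exact (norm_fst_le _).trans (hb t ht)
  have low : ∀ t, 0 ≤ t → a ^ 2 / 8 * (γ t).1 ^ 2 ≤ W t := fun t ht => by
    have := sq t ht
    simp only [hW]
    nlinarith [sq_nonneg ((γ t).2 + a / 2 * (γ t).1),
      mul_nonneg (sq_nonneg (γ t).1) (sub_nonneg.2 this)]
  have up : ∀ t, W t ≤ (1 + a + a ^ 2) * ((γ t).1 ^ 2 + (γ t).2 ^ 2) := fun t => by
    simp only [hW]
    have h1 : 0 ≤ a / 4 * ((γ t).1 - (γ t).2) ^ 2 := by positivity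
    have h2 : 0 ≤ a * ((γ t).1 ^ 2 + (γ t).2 ^ 2) := by positivity
    have h3 : 0 ≤ a ^ 2 * (γ t).1 ^ 2 := by positivity
    have h4 : 0 ≤ a ^ 2 * (γ t).2 ^ 2 := by positivity
    nlinarith [sq_nonneg (γ t).1, sq_nonneg (γ t).2, sq_nonneg ((γ t).1 ^ 2)]
  -- The energy deficit `d` keeps `x²` away from `1`: energy at most `3/64 - d` gives
  -- `(3/64)(1 - x²)² ≥ d`.
  have gap : ∀ t, 0 ≤ t → 4 * d ≤ 3 / 16 * (1 - (γ t).1 ^ 2) := fun t ht => by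
    have h1 := energy_antitone ha h ht
    simp only at h1
    rw [energy_of_norm_le (hb t ht)] at h1
    have h2 := sq t ht
    have : (1 - (γ t).1 ^ 2) ^ 2 ≤ 1 - (γ t).1 ^ 2 := by nlinarith [sq_nonneg (γ t).1]
    nlinarith [sq_nonneg (γ t).2]
  have hd1 : 4 * d ≤ 1 := by have := gap 0 le_rfl; nlinarith [sq_nonneg (γ 0).1]
  set r : ℝ := a / 2 * (4 * d) / (1 + a + a ^ 2) with hr
  have hr0 : 0 < r := by positivity
  have hrC : r * (1 + a + a ^ 2) = a / 2 * (4 * d) := by rw [hr]; field_simp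
  have Wd : ∀ t, 0 ≤ t → HasDerivAt W
      (-(a / 2) * ((γ t).2 ^ 2 + (γ t).1 * reac (γ t).1)) t := by
    intro t ht
    have dx := h.fst (hb t ht)
    have dv := h.snd (hb t ht)
    refine ((((dv.pow 2).div_const 2).add ((((dx.pow 2).div_const 2).sub
      ((dx.pow 4).div_const 4)).const_mul (3 / 16))).add
      (((dx.mul dv).add (((dx.pow 2).const_mul a).div_const 2)).const_mul (a / 2))).congr_deriv ?_
    simp only [reac]
    push_cast
    ring
  have decay : ∀ t, 0 ≤ t →
      -(a / 2) * ((γ t).2 ^ 2 + (γ t).1 * reac (γ t).1) + r * W t ≤ 0 := by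
    intro t ht
    have h1 := mul_le_mul_of_nonneg_left (up t) hr0.le
    rw [← mul_assoc, hrC] at h1
    have h2 : 4 * d * (γ t).1 ^ 2 ≤ (γ t).1 * reac (γ t).1 := by
      have := mul_le_mul_of_nonneg_right (gap t ht) (sq_nonneg (γ t).1)
      simp only [reac]; nlinarith
    have h3 : 4 * d * (γ t).2 ^ 2 ≤ (γ t).2 ^ 2 := by nlinarith [sq_nonneg (γ t).2]
    nlinarith
  have ed : ∀ t, HasDerivAt (fun t => Real.exp (r * t)) (Real.exp (r * t) * r) t := fun t => by
    simpa using ((hasDerivAt_id t).const_mul r).exp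
  have anti : AntitoneOn (fun t => Real.exp (r * t) * W t) (Ici 0) :=
    antitoneOn_of_hasDerivWithinAt_nonpos (convex_Ici 0)
      (fun t ht => ((ed t).mul (Wd t ht)).continuousAt.continuousWithinAt)
      (fun t ht => ((ed t).mul (Wd t (interior_subset ht))).hasDerivWithinAt) fun t ht => by
        have := mul_nonpos_of_nonneg_of_nonpos (Real.exp_pos (r * t)).le
          (decay t (interior_subset ht))
        linarith
  have bound : ∀ t, 0 ≤ t → (γ t).1 ^ 2 ≤ 8 / a ^ 2 * W 0 * Real.exp (-(r * t)) := by
    intro t ht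
    have h1 := anti (mem_Ici.2 le_rfl) ht ht
    simp only [mul_zero, Real.exp_zero, one_mul] at h1
    have h2 : W t ≤ W 0 * Real.exp (-(r * t)) := by
      rw [Real.exp_neg, ← div_eq_mul_inv, le_div_iff₀ (Real.exp_pos _)]
      linarith
    have h3 := (low t ht).trans h2
    have : (γ t).1 ^ 2 = 8 / a ^ 2 * (a ^ 2 / 8 * (γ t).1 ^ 2) := by field_simp
    rw [this, mul_assoc]
    exact mul_le_mul_of_nonneg_left h3 (by positivity)
  have lim : Tendsto (fun t => 8 / a ^ 2 * W 0 * Real.exp (-(r * t))) atTop (𝓝 0) := by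
    have := (Real.tendsto_exp_neg_atTop_nhds_zero.comp
      (tendsto_id.const_mul_atTop hr0)).const_mul (8 / a ^ 2 * W 0)
    simpa [Function.comp_def] using this
  have sqlim : Tendsto (fun t => (γ t).1 ^ 2) atTop (𝓝 0) :=
    tendsto_of_tendsto_of_tendsto_of_le_of_le' tendsto_const_nhds lim
      (Eventually.of_forall fun t => sq_nonneg _)
      (by filter_upwards [eventually_ge_atTop 0] with t ht using bound t ht)
  have := sqlim.sqrt
  simp only [Real.sqrt_sq_eq_abs, Real.sqrt_zero] at this
  exact (tendsto_zero_iff_abs_tendsto_zero _).2 this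

end EnvelopeFront

/-- Existence of the envelope function: for every `c > 0` there is a `C²`
function `χ : ℝ → ℝ` with `−4π χ'' + (3π/4)(χ³ − χ) − c χ' = 0` on `ℝ`,
`χ(x) → 1` as `x → −∞` and `χ(x) → 0` as `x → +∞`. -/
theorem envelope_front_existence (c : ℝ) (hc : 0 < c) :
    ∃ χ : ℝ → ℝ, ContDiff ℝ 2 χ ∧
      (∀ x : ℝ, -4 * Real.pi * deriv (deriv χ) x
          + 3 * Real.pi / 4 * ((χ x) ^ 3 - χ x) - c * deriv χ x = 0) ∧
      Filter.Tendsto χ Filter.atBot (nhds 1) ∧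
      Filter.Tendsto χ Filter.atTop (nhds 0) := by
  have hpi := Real.pi_pos
  obtain ⟨a, ha, hac⟩ : ∃ a : ℝ, 0 < a ∧ 4 * Real.pi * a = c :=
    ⟨c / (4 * Real.pi), by positivity, by field_simp⟩
  obtain ⟨γ, h, h0, hR⟩ := EnvelopeFront.exists_backward ha
  have hE := EnvelopeFront.energy_zero_lt ha h h0 hR
  have n0 : ‖γ 0‖ < 1 := (hR 0 le_rfl).1.lt_of_ne fun e => by
    linarith [EnvelopeFront.energy_boundary e]
  have box : ∀ t, ‖γ t‖ ≤ 1 := fun t => by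
    rcases le_total t 0 with ht | ht
    · exact (hR t ht).1
    · exact (EnvelopeFront.trap ha h n0 hE ht).le
  have dx : ∀ t, HasDerivAt (fun t => (γ t).1) (γ t).2 t := fun t => h.fst (box t)
  have dv := fun t => h.snd (box t)
  have e1 : deriv (fun t => (γ t).1) = fun t => (γ t).2 := funext fun t => (dx t).deriv
  have e2 : deriv (fun t => (γ t).2) = fun t => -a * (γ t).2 - EnvelopeFront.reac (γ t).1 :=
    funext fun t => (dv t).deriv
  refine ⟨fun t => (γ t).1, ?_, fun t => ?_, EnvelopeFront.tendsto_atBot_one ha h hR,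
    EnvelopeFront.tendsto_atTop_zero ha h hE fun t _ => box t⟩
  · rw [show (2 : WithTop ℕ∞) = 1 + 1 by norm_num, contDiff_succ_iff_deriv]
    refine ⟨fun t => (dx t).differentiableAt, by simp, ?_⟩
    rw [e1, contDiff_one_iff_deriv]
    refine ⟨fun t => (dv t).differentiableAt, ?_⟩
    rw [e2]
    exact (h.continuous.snd.const_mul (-a)).sub
      (EnvelopeFront.reac_cont.comp h.continuous.fst)
  · rw [e1, e2]
    simp only [EnvelopeFront.reac]
    rw [← hac]
    ring
end
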